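/- Assume h ≥ 0 on [0,1] and H > 0 on (0,1]. Let u be a solution of the traveling-wave problem with speed c > 0, and suppose there exist β ∈ ℝ, γ > 0 and positive finite limits lim_{v→1−} D(v)/(1−v)^β and lim_{v→1−} g(v)/(1−v)^γ, with −1 < γ + β/(p−1) ≤ 1/(p−1). If (γ − β + 1)/p < 1, then u attains the value 1, i.e., there exists ξ ∈ ℝ with u(ξ) = 1. If (γ − β + 1)/p ≥ 1, then u(ξ) < 1 for all ξ ∈ ℝ. -/

import Mathlib

open Set MeasureTheory Filter

/-- The conjugate exponent `p' = p/(p-1)`. -/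
noncomputable def pconj (p : ℝ) : ℝ := p / (p - 1)

/-- The constant `k(p)` from the paper. -/
noncomputable def kfun (p : ℝ) : ℝ :=
  if p < 2 then 1 / (2 ^ (pconj p - 1) - 1)
  else if p = 2 then 1
  else pconj p / (pconj p - 1 +
    (1 + pconj p * (pconj p - 1) ^ ((1 : ℝ) / (pconj p - 2)) +
      (pconj p - 1) ^ (pconj p / (pconj p - 2))) /
    (1 + (pconj p - 1) ^ ((1 : ℝ) / (pconj p - 2))) ^ pconj p)

/-- Standing assumptions on the data `p, θ, D, H, h, g` (combustion setting). -/
structure CombSetup (p θ : ℝ) (D H h g : ℝ → ℝ) : Prop where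
  hp : 1 < p
  hθ0 : 0 < θ
  hθ1 : θ < 1
  hD : ContDiffOn ℝ 1 D (Ioo 0 1)
  hDpos : ∀ v ∈ Ioo (0 : ℝ) 1, 0 < D v
  hH : ContDiffOn ℝ 1 H (Icc 0 1)
  hH0 : H 0 = 0
  hh : ContinuousOn h (Icc 0 1)
  hHd : ∀ v ∈ Icc (0 : ℝ) 1, HasDerivWithinAt H (h v) (Icc 0 1) v
  hgc : ContinuousOn g (Icc 0 1)
  hg0 : ∀ v ∈ Icc (0 : ℝ) θ, g v = 0
  hgpos : ∀ v ∈ Ioo θ 1, 0 < g v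
  hg1 : g 1 = 0
  hInt : IntegrableOn (fun v => D v ^ (pconj p - 1) * g v) (Ioo 0 1)

/-- The diffusive flux `ξ ↦ D(u(ξ)) |u'(ξ)|^{p-2} u'(ξ)`. -/
noncomputable def flux (p : ℝ) (D u : ℝ → ℝ) : ℝ → ℝ :=
  fun ξ => D (u ξ) * (|deriv u ξ| ^ (p - 2) * deriv u ξ)

/-- Solution of the traveling-wave problem with speed `c`. -/
structure IsTWSol (p c : ℝ) (D h g : ℝ → ℝ) (u : ℝ → ℝ) : Prop where
  cont : Continuous u
  mem : ∀ ξ, u ξ ∈ Icc (0 : ℝ) 1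
  smooth : ContDiffOn ℝ 1 u {ξ | u ξ ∈ Ioo (0 : ℝ) 1}
  eqn : ∀ ξ ∈ {ξ | u ξ ∈ Ioo (0 : ℝ) 1},
    HasDerivAt (flux p D u) (-(c + h (u ξ)) * deriv u ξ - g (u ξ)) ξ
  flux_cont : Continuous (fun ξ => if u ξ ∈ Ioo (0 : ℝ) 1 then flux p D u ξ else 0)
  flux_to0 : ∀ ε > 0, ∃ δ > 0, ∀ ξ, u ξ ∈ Ioo (0 : ℝ) 1 → u ξ < δ → |flux p D u ξ| < ε
  flux_to1 : ∀ ε > 0, ∃ δ > 0, ∀ ξ, u ξ ∈ Ioo (0 : ℝ) 1 → 1 - δ < u ξ → |flux p D u ξ| < ε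
  lim_bot : Tendsto u atBot (nhds 1)
  lim_top : Tendsto u atTop (nhds 0)

/-- Positive solution of the first-order problem with parameter `c`. -/
structure IsFOSol (p c : ℝ) (D h g : ℝ → ℝ) (y : ℝ → ℝ) : Prop where
  cont : ContinuousOn y (Icc 0 1)
  eqn : ∀ v ∈ Ioo (0 : ℝ) 1, HasDerivAt y
    (pconj p * ((c + h v) * (max (y v) 0) ^ (1 / p) - D v ^ (pconj p - 1) * g v)) v
  y0 : y 0 = 0
  y1 : y 1 = 0
  pos : ∀ v ∈ Ioo (0 : ℝ) 1, 0 < y v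

/-!
Put `s = 1 - u`, `z = -D(u)|u'|^{p-2}u'` and `σ = (γ - β + 1) / p`. Near the value `1` the equation
reads `z ≈ s ^ β * s' ^ (p - 1)`, `z' ≈ s ^ γ + O(s')`, and a wave leaves `(s, z) = (0, 0)` at the
last point where `u = 1`, or at `-∞` if there is none. Since `z' > 0` wherever `z = 0`, the flux
changes sign at most once, so `s' > 0` there. The power `s' ∝ s ^ σ` balances the two sides of the
system: the fluxes of `s' = ρ s ^ σ` with `ρ` small and `ρ` large are a lower and an upper barrier
for `z`, because `γ ≤ σ` makes the convection term at most as large as the reaction term. Hence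
`s'` is comparable to `s ^ σ`, and Osgood's criterion for `s' = s ^ σ` decides whether `0` is left
at a finite time (`σ < 1`) or not (`σ ≥ 1`).
-/

open scoped Topology
open Asymptotics

section Comparison

variable {J : Set ℝ} {f f' : ℝ → ℝ}

theorem le_of_le_of_hasDerivAt_neg_of_eq (hJ : J.OrdConnected)
    (hf : ∀ ξ ∈ J, HasDerivAt f (f' ξ) ξ) {m a x : ℝ} (hneg : ∀ ξ ∈ J, f ξ = m → f' ξ < 0)
    (ha : a ∈ J) (hx : x ∈ J) (hax : a ≤ x) (hfa : f a ≤ m) : f x ≤ m := by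
  have hsub : Icc a x ⊆ J := hJ.out ha hx
  exact image_le_of_deriv_right_lt_deriv_boundary
    (fun ξ hξ => (hf ξ (hsub hξ)).continuousAt.continuousWithinAt)
    (fun ξ hξ => (hf ξ (hsub (Ico_subset_Icc_self hξ))).hasDerivWithinAt) hfa
    (fun ξ => hasDerivAt_const ξ m) (fun ξ hξ => hneg ξ (hsub (Ico_subset_Icc_self hξ)))
    (right_mem_Icc.2 hax)

theorem nonpos_of_tendsto_zero_of_hasDerivAt_neg_of_pos (hJ : J.OrdConnected)
    (hf : ∀ ξ ∈ J, HasDerivAt f (f' ξ) ξ) (hlim : Tendsto (fun ξ : J => f ξ) atBot (𝓝 0))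
    (hneg : ∀ ξ ∈ J, 0 < f ξ → f' ξ < 0) : ∀ ξ ∈ J, f ξ ≤ 0 := by
  intro ξ hξ
  by_contra! hpos
  have : Nonempty J := ⟨⟨ξ, hξ⟩⟩
  obtain ⟨⟨a, ha⟩, haξ, hfa⟩ := ((eventually_le_atBot (⟨ξ, hξ⟩ : J)).and
    (hlim.eventually (ge_mem_nhds (half_pos hpos)))).exists
  have hle : f ξ ≤ f ξ / 2 := le_of_le_of_hasDerivAt_neg_of_eq hJ hf
    (fun x hx hfx => hneg x hx (hfx ▸ half_pos hpos)) ha hξ haξ hfa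
  linarith

end Comparison

section Osgood

variable {a b k σ : ℝ} {s s' : ℝ → ℝ}

theorem exists_nonpos_of_mul_rpow_le_deriv (hk : 0 < k) (hσ : σ < 1)
    (hs : ∀ ξ ∈ Iio b, HasDerivAt s (s' ξ) ξ) (hs' : ∀ ξ ∈ Iio b, k * s ξ ^ σ ≤ s' ξ) :
    ∃ ξ ∈ Iio b, s ξ ≤ 0 := by
  by_contra! hpos
  have hder (ξ) (hξ : ξ ∈ Iio b) :
      HasDerivAt (fun ξ => s ξ ^ (1 - σ)) (s' ξ * (1 - σ) * s ξ ^ (1 - σ - 1)) ξ :=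
    (hs ξ hξ).rpow_const (Or.inl (hpos ξ hξ).ne')
  have hder_ge (ξ) (hξ : ξ ∈ Iio b) : k * (1 - σ) ≤ deriv (fun ξ => s ξ ^ (1 - σ)) ξ := by
    have hcancel : s ξ ^ σ * s ξ ^ (1 - σ - 1) = 1 := by
      rw [← Real.rpow_add (hpos ξ hξ)]
      simp
    rw [(hder ξ hξ).deriv]
    calc k * (1 - σ) = k * s ξ ^ σ * (1 - σ) * s ξ ^ (1 - σ - 1) := by
          linear_combination -(k * (1 - σ)) * hcancel
      _ ≤ s' ξ * (1 - σ) * s ξ ^ (1 - σ - 1) := by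
          have := hpos ξ hξ
          have : 0 ≤ 1 - σ := by linarith
          gcongr
          exact hs' ξ hξ
  have hkσ : 0 < k * (1 - σ) := mul_pos hk (by linarith)
  set P := s (b - 1) ^ (1 - σ)
  have hP0 : 0 < P := Real.rpow_pos_of_pos (hpos _ (by simp)) _
  set ξ := b - 1 - P / (k * (1 - σ)) with hξ
  have hξ1 : ξ ≤ b - 1 := sub_le_self _ (by positivity)
  have hξb : ξ ∈ Iio b := hξ1.trans_lt (by linarith)
  have hmvt : k * (1 - σ) * (b - 1 - ξ) ≤ P - s ξ ^ (1 - σ) :=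
    (convex_Iio b).mul_sub_le_image_sub_of_le_deriv
      (fun x hx => (hder x hx).continuousAt.continuousWithinAt)
      (fun x hx => (hder x (interior_subset hx)).differentiableAt.differentiableWithinAt)
      (fun x hx => hder_ge x (interior_subset hx)) ξ hξb (b - 1) (by simp) hξ1
  rw [hξ, sub_sub_cancel, mul_div_cancel₀ _ hkσ.ne', ← hξ] at hmvt
  linarith [Real.rpow_pos_of_pos (hpos ξ hξb) (1 - σ)]

theorem nonpos_of_deriv_le_mul (hsc : ContinuousOn s (Icc a b)) (hsa : s a ≤ 0)
    (hs : ∀ ξ ∈ Ioo a b, HasDerivAt s (s' ξ) ξ) (hs' : ∀ ξ ∈ Ioo a b, s' ξ ≤ k * s ξ) :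
    ∀ ξ ∈ Icc a b, s ξ ≤ 0 := by
  have hanti : AntitoneOn (fun ξ => s ξ * Real.exp (-k * ξ)) (Icc a b) := by
    refine antitoneOn_of_hasDerivWithinAt_nonpos (convex_Icc a b)
      (f' := fun ξ => s' ξ * Real.exp (-k * ξ) + s ξ * (Real.exp (-k * ξ) * (-k * 1)))
      (hsc.mul (by fun_prop)) (fun ξ hξ => ?_) (fun ξ hξ => ?_) <;> rw [interior_Icc] at hξ
    · exact ((hs ξ hξ).mul ((hasDerivAt_id ξ).const_mul (-k)).exp).hasDerivWithinAt
    · linear_combination Real.exp (-k * ξ) * hs' ξ hξ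
  intro ξ hξ
  have hle : s ξ * Real.exp (-k * ξ) ≤ s a * Real.exp (-k * a) :=
    hanti (left_mem_Icc.2 (hξ.1.trans hξ.2)) hξ hξ.1
  exact nonpos_of_mul_nonpos_left
    (hle.trans (mul_nonpos_of_nonpos_of_nonneg hsa (Real.exp_pos _).le)) (Real.exp_pos _)

end Osgood

section Barrier

theorem exists_pos_rpow_add_mul_le {r A C M : ℝ} (hr : 0 < r) (hM : 0 < M) :
    ∃ ρ > 0, (A * ρ ^ r + C) * ρ ≤ M := by
  have hcont : Tendsto (fun ρ : ℝ => (A * ρ ^ r + C) * ρ) (𝓝 0) (𝓝 0) := by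
    have h := (((tendsto_id (x := 𝓝 (0 : ℝ))).rpow_const (Or.inr hr.le)).const_mul A).add_const C
    simpa using h.mul tendsto_id
  obtain ⟨ρ, hρM, hρ⟩ := ((hcont.mono_left nhdsWithin_le_nhds).eventually (ge_mem_nhds hM)
    |>.and (self_mem_nhdsWithin (s := Ioi 0))).exists
  exact ⟨ρ, hρ, hρM⟩

theorem exists_pos_le_rpow_sub_mul {r A : ℝ} (hr : 0 < r) (hA : 0 < A) (C M : ℝ) :
    ∃ ρ > 0, M ≤ (A * ρ ^ r - C) * ρ := by
  have hlim : Tendsto (fun ρ : ℝ => (A * ρ ^ r - C) * ρ) atTop atTop :=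
    (tendsto_atTop_add_const_right _ (-C)
      ((tendsto_rpow_atTop hr).const_mul_atTop hA)).atTop_mul_atTop₀ tendsto_id
  obtain ⟨ρ, hρM, hρ⟩ := ((hlim.eventually_ge_atTop M).and (eventually_gt_atTop 0)).exists
  exact ⟨ρ, hρ, hρM⟩

/-- On the interval `J`, the pair `(s, z)` with derivative `(s', z')` leaves `(0, 0)` at the left
end of `J`, finite or not (the filter `atBot` on the subtype `J`), with `s` increasing in `(0, 1]`.
This describes `s = 1 - u` and `z = -D(u)|u'|^{p-2}u'` for a wave leaving the value `1`. -/
structure IsDeparture (J : Set ℝ) (s s' z z' : ℝ → ℝ) : Prop where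
  hasDerivAt_fst : ∀ ξ ∈ J, HasDerivAt s (s' ξ) ξ
  hasDerivAt_snd : ∀ ξ ∈ J, HasDerivAt z (z' ξ) ξ
  mem_Ioc : ∀ ξ ∈ J, s ξ ∈ Ioc (0 : ℝ) 1
  deriv_pos : ∀ ξ ∈ J, 0 < s' ξ
  tendsto_fst : Tendsto (fun ξ : J => s ξ) atBot (𝓝 0)
  tendsto_snd : Tendsto (fun ξ : J => z ξ) atBot (𝓝 0)

theorem mul_rpow_mul_rpow_sub_one {p β γ σ L ρ s : ℝ} (hσ : β + p * σ = γ + 1) (hρ : 0 < ρ)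
    (hs : 0 < s) :
    L * s ^ β * (ρ * s ^ σ) ^ (p - 1) = L * ρ ^ (p - 1) * s ^ (γ - σ + 1) := by
  have hexp : s ^ (γ - σ + 1) = s ^ β * (s ^ σ) ^ (p - 1) := by
    rw [← Real.rpow_mul hs.le, ← Real.rpow_add hs]
    congr 1
    linear_combination -hσ
  rw [Real.mul_rpow hρ.le (Real.rpow_nonneg hs.le _), hexp]
  ring

theorem mul_rpow_sub_one_lt_iff {p β γ σ L ρ s t : ℝ} (hp : 1 < p)
    (hσ : β + p * σ = γ + 1) (hL : 0 < L) (hρ : 0 < ρ) (hs : 0 < s) (ht : 0 < t) :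
    L * s ^ β * t ^ (p - 1) < L * ρ ^ (p - 1) * s ^ (γ - σ + 1) ↔ t < ρ * s ^ σ := by
  rw [← mul_rpow_mul_rpow_sub_one hσ hρ hs, mul_lt_mul_iff_right₀ (by positivity),
    Real.rpow_lt_rpow_iff ht.le (by positivity) (by linarith)]

theorem lt_mul_rpow_sub_one_iff {p β γ σ L ρ s t : ℝ} (hp : 1 < p)
    (hσ : β + p * σ = γ + 1) (hL : 0 < L) (hρ : 0 < ρ) (hs : 0 < s) (ht : 0 < t) :
    L * ρ ^ (p - 1) * s ^ (γ - σ + 1) < L * s ^ β * t ^ (p - 1) ↔ ρ * s ^ σ < t := by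
  rw [← mul_rpow_mul_rpow_sub_one hσ hρ hs, mul_lt_mul_iff_right₀ (by positivity),
    Real.rpow_lt_rpow_iff (by positivity) ht.le (by linarith)]

theorem exists_mul_rpow_eq {r L ε : ℝ} (hr : r ≠ 0) (hL : 0 < L) (hε : 0 < ε) :
    ∃ ρ > 0, L * ρ ^ r = ε :=
  ⟨(ε / L) ^ r⁻¹, by positivity, by
    rw [Real.rpow_inv_rpow (by positivity) hr, mul_div_cancel₀ _ hL.ne']⟩

namespace IsDeparture

variable {p β γ σ L L₁ L₂ M C : ℝ} {J : Set ℝ} {s s' z z' : ℝ → ℝ}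

theorem tendsto_mul_rpow (hd : IsDeparture J s s' z z') (ε : ℝ) {α : ℝ} (hα : 0 < α) :
    Tendsto (fun ξ : J => ε * s ξ ^ α) atBot (𝓝 0) := by
  simpa [Real.zero_rpow hα.ne'] using
    (hd.tendsto_fst.rpow_const (p := α) (Or.inr hα.le)).const_mul ε

theorem hasDerivAt_mul_rpow (hd : IsDeparture J s s' z z') (ε τ : ℝ) {ξ : ℝ} (hξ : ξ ∈ J) :
    HasDerivAt (fun ξ => ε * s ξ ^ (τ + 1)) (ε * (τ + 1) * (s ξ ^ τ * s' ξ)) ξ :=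
  (((hd.hasDerivAt_fst ξ hξ).rpow_const (Or.inl (hd.mem_Ioc ξ hξ).1.ne')).const_mul ε).congr_deriv
    (by rw [add_sub_cancel_right]; ring)

theorem deriv_le_rpow_mul_deriv (hd : IsDeparture J s s' z z') {τ : ℝ} (hτ : τ ≤ 0) {ξ : ℝ}
    (hξ : ξ ∈ J) : s' ξ ≤ s ξ ^ τ * s' ξ :=
  le_mul_of_one_le_left (hd.deriv_pos ξ hξ).le
    (Real.one_le_rpow_of_pos_of_le_one_of_nonpos (hd.mem_Ioc ξ hξ).1 (hd.mem_Ioc ξ hξ).2 hτ)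

theorem exists_mul_rpow_le_snd (hd : IsDeparture J s s' z z') (hJ : J.OrdConnected)
    (hp : 1 < p) (hL : 0 < L) (hM : 0 < M) (hC : 0 ≤ C)
    (hσ : β + p * σ = γ + 1) (hσγ : σ < γ + 1) (hγσ : γ ≤ σ)
    (hz : ∀ ξ ∈ J, L * s ξ ^ β * s' ξ ^ (p - 1) ≤ z ξ)
    (hz' : ∀ ξ ∈ J, M * s ξ ^ γ - C * s' ξ ≤ z' ξ) :
    ∃ ε > 0, ∀ ξ ∈ J, ε * s ξ ^ (γ - σ + 1) ≤ z ξ := by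
  obtain ⟨ρ, hρ, hρM⟩ := exists_pos_rpow_add_mul_le (r := p - 1) (A := L * (γ - σ + 1)) (C := C)
    (by linarith) hM
  set ε := L * ρ ^ (p - 1) with hε
  have hε0 : 0 < ε := by positivity
  have hα : 0 < γ - σ + 1 := by linarith
  refine ⟨ε, hε0, fun ξ hξ => sub_nonpos.1 ?_⟩
  refine nonpos_of_tendsto_zero_of_hasDerivAt_neg_of_pos hJ
    (fun ξ hξ => (hd.hasDerivAt_mul_rpow ε (γ - σ) hξ).sub (hd.hasDerivAt_snd ξ hξ))
    (by simpa using (hd.tendsto_mul_rpow ε hα).sub hd.tendsto_snd) (fun ξ hξ hlt => ?_) ξ hξ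
  have hs := (hd.mem_Ioc ξ hξ).1
  have hslow : s' ξ < ρ * s ξ ^ σ :=
    (mul_rpow_sub_one_lt_iff hp hσ hL hρ hs (hd.deriv_pos ξ hξ)).1
      ((hz ξ hξ).trans_lt (sub_pos.1 hlt))
  have hreaction : s ξ ^ (γ - σ) * s' ξ < ρ * s ξ ^ γ := by
    calc s ξ ^ (γ - σ) * s' ξ < s ξ ^ (γ - σ) * (ρ * s ξ ^ σ) := by gcongr
      _ = ρ * s ξ ^ γ := by rw [mul_left_comm, ← Real.rpow_add hs, sub_add_cancel]
  have hconvection : C * s' ξ ≤ C * (s ξ ^ (γ - σ) * s' ξ) :=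
    mul_le_mul_of_nonneg_left (hd.deriv_le_rpow_mul_deriv (sub_nonpos.2 hγσ) hξ) hC
  calc ε * (γ - σ + 1) * (s ξ ^ (γ - σ) * s' ξ) - z' ξ
      ≤ (ε * (γ - σ + 1) + C) * (s ξ ^ (γ - σ) * s' ξ) - M * s ξ ^ γ := by
        linarith [hz' ξ hξ]
    _ < (ε * (γ - σ + 1) + C) * (ρ * s ξ ^ γ) - M * s ξ ^ γ := by gcongr
    _ = ((L * (γ - σ + 1) * ρ ^ (p - 1) + C) * ρ - M) * s ξ ^ γ := by rw [hε]; ring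
    _ ≤ 0 := mul_nonpos_of_nonpos_of_nonneg (sub_nonpos.2 hρM) (by positivity)

theorem exists_snd_le_mul_rpow (hd : IsDeparture J s s' z z') (hJ : J.OrdConnected)
    (hp : 1 < p) (hL : 0 < L) (hM : 0 < M) (hC : 0 ≤ C)
    (hσ : β + p * σ = γ + 1) (hσγ : σ < γ + 1) (hγσ : γ ≤ σ)
    (hz : ∀ ξ ∈ J, z ξ ≤ L * s ξ ^ β * s' ξ ^ (p - 1))
    (hz' : ∀ ξ ∈ J, z' ξ ≤ M * s ξ ^ γ + C * s' ξ) :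
    ∃ ε > 0, ∀ ξ ∈ J, z ξ ≤ ε * s ξ ^ (γ - σ + 1) := by
  have hα : 0 < γ - σ + 1 := by linarith
  obtain ⟨ρ, hρ, hρM⟩ := exists_pos_le_rpow_sub_mul (r := p - 1) (A := L * (γ - σ + 1))
    (by linarith) (by positivity) C M
  set ε := L * ρ ^ (p - 1) with hε
  have hε0 : 0 < ε := by positivity
  have hgap : 0 < ε * (γ - σ + 1) - C := by
    refine pos_of_mul_pos_left (hM.trans_le hρM |>.trans_eq ?_) hρ.le
    rw [hε]; ring
  refine ⟨ε, hε0, fun ξ hξ => sub_nonpos.1 ?_⟩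
  refine nonpos_of_tendsto_zero_of_hasDerivAt_neg_of_pos hJ
    (fun ξ hξ => (hd.hasDerivAt_snd ξ hξ).sub (hd.hasDerivAt_mul_rpow ε (γ - σ) hξ))
    (by simpa using hd.tendsto_snd.sub (hd.tendsto_mul_rpow ε hα)) (fun ξ hξ hlt => ?_) ξ hξ
  have hs := (hd.mem_Ioc ξ hξ).1
  have hfast : ρ * s ξ ^ σ < s' ξ :=
    (lt_mul_rpow_sub_one_iff hp hσ hL hρ hs (hd.deriv_pos ξ hξ)).1
      ((sub_pos.1 hlt).trans_le (hz ξ hξ))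
  have hreaction : ρ * s ξ ^ γ < s ξ ^ (γ - σ) * s' ξ := by
    calc ρ * s ξ ^ γ = s ξ ^ (γ - σ) * (ρ * s ξ ^ σ) := by
          rw [mul_left_comm, ← Real.rpow_add hs, sub_add_cancel]
      _ < s ξ ^ (γ - σ) * s' ξ := by gcongr
  have hconvection : C * s' ξ ≤ C * (s ξ ^ (γ - σ) * s' ξ) :=
    mul_le_mul_of_nonneg_left (hd.deriv_le_rpow_mul_deriv (sub_nonpos.2 hγσ) hξ) hC
  calc z' ξ - ε * (γ - σ + 1) * (s ξ ^ (γ - σ) * s' ξ)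
      ≤ M * s ξ ^ γ - (ε * (γ - σ + 1) - C) * (s ξ ^ (γ - σ) * s' ξ) := by
        linarith [hz' ξ hξ]
    _ < M * s ξ ^ γ - (ε * (γ - σ + 1) - C) * (ρ * s ξ ^ γ) := by gcongr
    _ = (M - (L * (γ - σ + 1) * ρ ^ (p - 1) - C) * ρ) * s ξ ^ γ := by rw [hε]; ring
    _ ≤ 0 := mul_nonpos_of_nonpos_of_nonneg (sub_nonpos.2 hρM) (by positivity)

theorem exists_mul_rpow_le_deriv (hd : IsDeparture J s s' z z') (hJ : J.OrdConnected)
    (hp : 1 < p) (hL₁ : 0 < L₁) (hL₂ : 0 < L₂) (hM : 0 < M) (hC : 0 ≤ C)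
    (hσ : β + p * σ = γ + 1) (hσγ : σ < γ + 1) (hγσ : γ ≤ σ)
    (hz₁ : ∀ ξ ∈ J, L₁ * s ξ ^ β * s' ξ ^ (p - 1) ≤ z ξ)
    (hz₂ : ∀ ξ ∈ J, z ξ ≤ L₂ * s ξ ^ β * s' ξ ^ (p - 1))
    (hz' : ∀ ξ ∈ J, M * s ξ ^ γ - C * s' ξ ≤ z' ξ) :
    ∃ k > 0, ∀ ξ ∈ J, k * s ξ ^ σ ≤ s' ξ := by
  obtain ⟨ε, hε, hlow⟩ := hd.exists_mul_rpow_le_snd hJ hp hL₁ hM hC hσ hσγ hγσ hz₁ hz'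
  obtain ⟨k, hk, rfl⟩ := exists_mul_rpow_eq (sub_pos.2 hp).ne' hL₂ hε
  refine ⟨k, hk, fun ξ hξ => le_of_not_gt fun hlt => ?_⟩
  exact ((hlow ξ hξ).trans (hz₂ ξ hξ)).not_gt
    ((mul_rpow_sub_one_lt_iff hp hσ hL₂ hk (hd.mem_Ioc ξ hξ).1 (hd.deriv_pos ξ hξ)).2 hlt)

theorem exists_deriv_le_mul_rpow (hd : IsDeparture J s s' z z') (hJ : J.OrdConnected)
    (hp : 1 < p) (hL₁ : 0 < L₁) (hL₂ : 0 < L₂) (hM : 0 < M) (hC : 0 ≤ C)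
    (hσ : β + p * σ = γ + 1) (hσγ : σ < γ + 1) (hγσ : γ ≤ σ)
    (hz₁ : ∀ ξ ∈ J, L₁ * s ξ ^ β * s' ξ ^ (p - 1) ≤ z ξ)
    (hz₂ : ∀ ξ ∈ J, z ξ ≤ L₂ * s ξ ^ β * s' ξ ^ (p - 1))
    (hz' : ∀ ξ ∈ J, z' ξ ≤ M * s ξ ^ γ + C * s' ξ) :
    ∃ k > 0, ∀ ξ ∈ J, s' ξ ≤ k * s ξ ^ σ := by
  obtain ⟨ε, hε, hup⟩ := hd.exists_snd_le_mul_rpow hJ hp hL₂ hM hC hσ hσγ hγσ hz₂ hz'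
  obtain ⟨k, hk, rfl⟩ := exists_mul_rpow_eq (sub_pos.2 hp).ne' hL₁ hε
  refine ⟨k, hk, fun ξ hξ => le_of_not_gt fun hlt => ?_⟩
  exact ((hz₁ ξ hξ).trans (hup ξ hξ)).not_gt
    ((lt_mul_rpow_sub_one_iff hp hσ hL₁ hk (hd.mem_Ioc ξ hξ).1 (hd.deriv_pos ξ hξ)).2 hlt)

end IsDeparture

end Barrier

theorem eventually_mul_mem_Icc_of_tendsto_div {α : Type*} {l : Filter α} {f w : α → ℝ} {L : ℝ}
    (hL : 0 < L) (hw : ∀ᶠ x in l, 0 < w x) (hf : Tendsto (fun x => f x / w x) l (𝓝 L)) :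
    ∀ᶠ x in l, f x ∈ Icc (L / 2 * w x) (2 * L * w x) := by
  filter_upwards [hf (Icc_mem_nhds (half_lt_self hL) (lt_two_mul_self hL)), hw] with x hx hwx
  exact ⟨(le_div_iff₀ hwx).1 hx.1, (div_le_iff₀ hwx).1 hx.2⟩

section Flux

variable {p : ℝ} {D u : ℝ → ℝ} {ξ : ℝ}

theorem flux_nonpos_iff (hD : 0 < D (u ξ)) : flux p D u ξ ≤ 0 ↔ deriv u ξ ≤ 0 := by
  refine ⟨fun hflux => not_lt.1 fun hpos => hflux.not_gt ?_, fun hneg => ?_⟩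
  · exact mul_pos hD (mul_pos (Real.rpow_pos_of_pos (abs_pos.2 hpos.ne') _) hpos)
  · exact mul_nonpos_of_nonneg_of_nonpos hD.le
      (mul_nonpos_of_nonneg_of_nonpos (Real.rpow_nonneg (abs_nonneg _) _) hneg)

theorem flux_eq_zero_iff (hD : D (u ξ) ≠ 0) : flux p D u ξ = 0 ↔ deriv u ξ = 0 := by
  simp +contextual [flux, hD, Real.rpow_eq_zero_iff_of_nonneg]

theorem neg_flux_of_deriv_neg (hu : deriv u ξ < 0) :
    -flux p D u ξ = D (u ξ) * (-deriv u ξ) ^ (p - 1) := by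
  rw [flux, abs_of_neg hu, show p - 1 = p - 2 + 1 by ring, Real.rpow_add_one (neg_pos.2 hu).ne']
  ring

end Flux

namespace IsTWSol

variable {p c β γ σ : ℝ} {D h g u : ℝ → ℝ} {J : Set ℝ}

theorem hasDerivAt (hu : IsTWSol p c D h g u) {ξ : ℝ} (hξ : u ξ ∈ Ioo (0 : ℝ) 1) :
    HasDerivAt u (deriv u ξ) ξ :=
  ((hu.smooth.contDiffAt ((isOpen_Ioo.preimage hu.cont).mem_nhds hξ)).differentiableAt
    one_ne_zero).hasDerivAt

theorem tendsto_flux_of_tendsto_one (hu : IsTWSol p c D h g u) {α : Type*} {l : Filter α}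
    {φ : α → ℝ} (hmem : ∀ x, u (φ x) ∈ Ioo (0 : ℝ) 1) (hlim : Tendsto (u ∘ φ) l (𝓝 1)) :
    Tendsto (flux p D u ∘ φ) l (𝓝 0) := by
  rw [Metric.tendsto_nhds]
  intro ε hε
  obtain ⟨δ, hδ, hflux⟩ := hu.flux_to1 ε hε
  filter_upwards [hlim.eventually (lt_mem_nhds (sub_lt_self 1 hδ))] with x hx
  simpa using hflux (φ x) (hmem x) hx

theorem deriv_nonpos_of_tendsto_one (hu : IsTWSol p c D h g u) (hJ : J.OrdConnected)
    (hJu : ∀ ξ ∈ J, u ξ ∈ Ioo (0 : ℝ) 1) (hD : ∀ ξ ∈ J, 0 < D (u ξ)) (hg : ∀ ξ ∈ J, 0 < g (u ξ))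
    (hlim : Tendsto (fun ξ : J => u ξ) atBot (𝓝 1)) :
    ∀ ξ ∈ J, deriv u ξ ≤ 0 := by
  intro ξ hξ
  have : Nonempty J := ⟨⟨ξ, hξ⟩⟩
  obtain ⟨⟨a, ha⟩, haξ, hua⟩ := ((eventually_le_atBot (⟨ξ, hξ⟩ : J)).and
    (hlim.eventually (lt_mem_nhds (hJu ξ hξ).2))).exists
  replace haξ : a < ξ := lt_of_le_of_ne haξ (by rintro rfl; exact lt_irrefl _ hua)
  have hsub : Icc a ξ ⊆ J := hJ.out ha hξ
  obtain ⟨η, hη, hslope⟩ := exists_hasDerivAt_eq_slope u (deriv u) haξ hu.cont.continuousOn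
    (fun x hx => hu.hasDerivAt (hJu x (hsub (Ioo_subset_Icc_self hx))))
  have hηJ : η ∈ J := hsub (Ioo_subset_Icc_self hη)
  have hη0 : flux p D u η ≤ 0 := (flux_nonpos_iff (hD η hηJ)).2
    (hslope.trans_le (div_nonpos_of_nonpos_of_nonneg (sub_nonpos.2 hua.le) (sub_nonneg.2 haξ.le)))
  refine (flux_nonpos_iff (hD ξ hξ)).1 (le_of_le_of_hasDerivAt_neg_of_eq hJ
    (fun x hx => hu.eqn x (hJu x hx)) (fun x hx hx0 => ?_) hηJ hξ hη.2.le hη0)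
  rw [(flux_eq_zero_iff (hD x hx).ne').1 hx0]
  linarith [hg x hx]

theorem deriv_neg_of_tendsto_one (hu : IsTWSol p c D h g u) (hJ : J.OrdConnected)
    (hJu : ∀ ξ ∈ J, u ξ ∈ Ioo (0 : ℝ) 1) (hD : ∀ ξ ∈ J, 0 < D (u ξ)) (hg : ∀ ξ ∈ J, 0 < g (u ξ))
    (hlim : Tendsto (fun ξ : J => u ξ) atBot (𝓝 1)) (hJo : IsOpen J) :
    ∀ ξ ∈ J, deriv u ξ < 0 := by
  intro ξ hξ
  have hle := hu.deriv_nonpos_of_tendsto_one hJ hJu hD hg hlim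
  refine lt_of_le_of_ne (hle ξ hξ) fun hzero => ?_
  have hmax : IsLocalMax (flux p D u) ξ := by
    filter_upwards [hJo.mem_nhds hξ] with η hη
    rw [(flux_eq_zero_iff (hD ξ hξ).ne').2 hzero]
    exact (flux_nonpos_iff (hD η hη)).2 (hle η hη)
  have hcrit := hmax.hasDerivAt_eq_zero (hu.eqn ξ (hJu ξ hξ))
  rw [hzero] at hcrit
  linarith [hg ξ hξ]

theorem isDeparture (hu : IsTWSol p c D h g u) (hJ : J.OrdConnected)
    (hJu : ∀ ξ ∈ J, u ξ ∈ Ioo (0 : ℝ) 1) (hD : ∀ ξ ∈ J, 0 < D (u ξ)) (hg : ∀ ξ ∈ J, 0 < g (u ξ))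
    (hlim : Tendsto (fun ξ : J => u ξ) atBot (𝓝 1)) (hJo : IsOpen J) :
    IsDeparture J (fun ξ => 1 - u ξ) (fun ξ => -deriv u ξ) (fun ξ => -flux p D u ξ)
      (fun ξ => (c + h (u ξ)) * deriv u ξ + g (u ξ)) where
  hasDerivAt_fst ξ hξ := (hu.hasDerivAt (hJu ξ hξ)).const_sub 1
  hasDerivAt_snd ξ hξ := (hu.eqn ξ (hJu ξ hξ)).neg.congr_deriv (by ring)
  mem_Ioc ξ hξ := ⟨sub_pos.2 (hJu ξ hξ).2, sub_le_self 1 (hJu ξ hξ).1.le⟩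
  deriv_pos ξ hξ := neg_pos.2 (hu.deriv_neg_of_tendsto_one hJ hJu hD hg hlim hJo ξ hξ)
  tendsto_fst := by simpa using hlim.const_sub 1
  tendsto_snd := by
    simpa using (hu.tendsto_flux_of_tendsto_one (φ := ((↑) : J → ℝ)) (fun ξ => hJu ξ ξ.2) hlim).neg

theorem exists_neg_deriv_bounds_of_mem_Icc (hu : IsTWSol p c D h g u) (hp : 1 < p)
    (hσ : β + p * σ = γ + 1) (hσγ : σ < γ + 1) (hγσ : γ ≤ σ)
    (hJ : J.OrdConnected) (hJo : IsOpen J) (hJu : ∀ ξ ∈ J, u ξ ∈ Ioo (0 : ℝ) 1)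
    (hlim : Tendsto (fun ξ : J => u ξ) atBot (𝓝 1)) {L₁ L₂ M₁ M₂ C : ℝ}
    (hL₁ : 0 < L₁) (hL₂ : 0 < L₂) (hM₁ : 0 < M₁) (hM₂ : 0 < M₂) (hC : 0 ≤ C)
    (hD : ∀ ξ ∈ J, D (u ξ) ∈ Icc (L₁ * (1 - u ξ) ^ β) (L₂ * (1 - u ξ) ^ β))
    (hg : ∀ ξ ∈ J, g (u ξ) ∈ Icc (M₁ * (1 - u ξ) ^ γ) (M₂ * (1 - u ξ) ^ γ))
    (hh : ∀ ξ ∈ J, |c + h (u ξ)| ≤ C) :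
    (∃ k > 0, ∀ ξ ∈ J, k * (1 - u ξ) ^ σ ≤ -deriv u ξ) ∧
      ∃ k > 0, ∀ ξ ∈ J, -deriv u ξ ≤ k * (1 - u ξ) ^ σ := by
  have hpow (δ ξ : ℝ) (hξ : ξ ∈ J) : 0 < (1 - u ξ) ^ δ :=
    Real.rpow_pos_of_pos (sub_pos.2 (hJu ξ hξ).2) δ
  have hd := hu.isDeparture hJ hJu (fun ξ hξ => (mul_pos hL₁ (hpow β ξ hξ)).trans_le (hD ξ hξ).1)
    (fun ξ hξ => (mul_pos hM₁ (hpow γ ξ hξ)).trans_le (hg ξ hξ).1) hlim hJo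
  have hflux (ξ) (hξ : ξ ∈ J) : -flux p D u ξ = D (u ξ) * (-deriv u ξ) ^ (p - 1) :=
    neg_flux_of_deriv_neg (neg_pos.1 (hd.deriv_pos ξ hξ))
  have hflux_lower (ξ) (hξ : ξ ∈ J) :
      L₁ * (1 - u ξ) ^ β * (-deriv u ξ) ^ (p - 1) ≤ -flux p D u ξ := by
    rw [hflux ξ hξ]
    exact mul_le_mul_of_nonneg_right (hD ξ hξ).1 (Real.rpow_nonneg (hd.deriv_pos ξ hξ).le _)
  have hflux_upper (ξ) (hξ : ξ ∈ J) :
      -flux p D u ξ ≤ L₂ * (1 - u ξ) ^ β * (-deriv u ξ) ^ (p - 1) := by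
    rw [hflux ξ hξ]
    exact mul_le_mul_of_nonneg_right (hD ξ hξ).2 (Real.rpow_nonneg (hd.deriv_pos ξ hξ).le _)
  have hconvection (ξ) (hξ : ξ ∈ J) : |(c + h (u ξ)) * deriv u ξ| ≤ C * -deriv u ξ := by
    rw [abs_mul, abs_of_neg (neg_pos.1 (hd.deriv_pos ξ hξ))]
    exact mul_le_mul_of_nonneg_right (hh ξ hξ) (hd.deriv_pos ξ hξ).le
  exact ⟨hd.exists_mul_rpow_le_deriv hJ hp hL₁ hL₂ hM₁ hC hσ hσγ hγσ hflux_lower hflux_upper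
      fun ξ hξ => by linarith [(hg ξ hξ).1, (abs_le.1 (hconvection ξ hξ)).1],
    hd.exists_deriv_le_mul_rpow hJ hp hL₁ hL₂ hM₂ hC hσ hσγ hγσ hflux_lower hflux_upper
      fun ξ hξ => by linarith [(hg ξ hξ).2, (abs_le.1 (hconvection ξ hξ)).2]⟩

theorem exists_neg_deriv_bounds (hu : IsTWSol p c D h g u) (hp : 1 < p)
    (hh : h =O[𝓝[<] 1] fun _ => (1 : ℝ))
    (hDlim : ∃ L > 0, Tendsto (fun v => D v / (1 - v) ^ β) (𝓝[<] 1) (𝓝 L))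
    (hglim : ∃ M > 0, Tendsto (fun v => g v / (1 - v) ^ γ) (𝓝[<] 1) (𝓝 M))
    (hσ : β + p * σ = γ + 1) (hσγ : σ < γ + 1) (hγσ : γ ≤ σ) :
    ∃ r ∈ Ico (0 : ℝ) 1, ∀ J : Set ℝ, J.OrdConnected → IsOpen J → MapsTo u J (Ioo r 1) →
      Tendsto (fun ξ : J => u ξ) atBot (𝓝 1) →
      (∃ k > 0, ∀ ξ ∈ J, k * (1 - u ξ) ^ σ ≤ -deriv u ξ) ∧
        ∃ k > 0, ∀ ξ ∈ J, -deriv u ξ ≤ k * (1 - u ξ) ^ σ := by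
  obtain ⟨L, hL, hDL⟩ := hDlim
  obtain ⟨M, hM, hgM⟩ := hglim
  obtain ⟨C, hC, hhC⟩ := ((isBigO_const_const c one_ne_zero _).add hh).exists_nonneg
  have hpow (δ : ℝ) : ∀ᶠ v in 𝓝[<] (1 : ℝ), 0 < (1 - v) ^ δ := by
    filter_upwards [self_mem_nhdsWithin] with v hv
    exact Real.rpow_pos_of_pos (sub_pos.2 hv) δ
  obtain ⟨r, hr, hbounds⟩ := (mem_nhdsLT_iff_exists_mem_Ico_Ioo_subset zero_lt_one).1
    ((eventually_mul_mem_Icc_of_tendsto_div hL (hpow β) hDL).and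
      ((eventually_mul_mem_Icc_of_tendsto_div hM (hpow γ) hgM).and hhC.bound))
  refine ⟨r, hr, fun J hJ hJo hJr hlim => ?_⟩
  exact hu.exists_neg_deriv_bounds_of_mem_Icc hp hσ hσγ hγσ hJ hJo
    (fun ξ hξ => Ioo_subset_Ioo_left hr.1 (hJr hξ)) hlim (half_pos hL) (mul_pos two_pos hL)
    (half_pos hM) (mul_pos two_pos hM) hC (fun ξ hξ => (hbounds (hJr hξ)).1)
    (fun ξ hξ => (hbounds (hJr hξ)).2.1) (fun ξ hξ => by simpa using (hbounds (hJr hξ)).2.2)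

theorem exists_last_eq_one (hu : IsTWSol p c D h g u) {ξ₀ : ℝ} (hξ₀ : u ξ₀ = 1) :
    ∃ a, u a = 1 ∧ ∀ ξ > a, u ξ < 1 := by
  have hclosed : IsClosed {ξ | u ξ = 1} := isClosed_eq hu.cont continuous_const
  have hbdd : BddAbove {ξ | u ξ = 1} := by
    obtain ⟨B, hB⟩ := eventually_atTop.1 (hu.lim_top.eventually (gt_mem_nhds one_pos))
    exact ⟨B, fun ξ (hξ : u ξ = 1) => le_of_not_ge fun hBξ => (hB ξ hBξ).ne hξ⟩
  exact ⟨sSup {ξ | u ξ = 1}, hclosed.csSup_mem ⟨ξ₀, hξ₀⟩ hbdd, fun ξ hξ =>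
    (hu.mem ξ).2.lt_of_ne fun hξ1 => (le_csSup hbdd hξ1).not_gt hξ⟩

theorem exists_eq_one (hu : IsTWSol p c D h g u) {r : ℝ} (hr : r ∈ Ico (0 : ℝ) 1) (hσ : σ < 1)
    (hrate : ∀ b, MapsTo u (Iio b) (Ioo r 1) →
      ∃ k > 0, ∀ ξ ∈ Iio b, k * (1 - u ξ) ^ σ ≤ -deriv u ξ) : ∃ ξ, u ξ = 1 := by
  by_contra! hne
  have hlt (ξ) : u ξ < 1 := (hu.mem ξ).2.lt_of_ne (hne ξ)
  obtain ⟨b, hb⟩ := eventually_atBot.1 (hu.lim_bot.eventually (lt_mem_nhds hr.2))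
  have hJ : MapsTo u (Iio b) (Ioo r 1) := fun ξ hξ => ⟨hb ξ (le_of_lt hξ), hlt ξ⟩
  obtain ⟨k, hk, hbound⟩ := hrate b hJ
  obtain ⟨ξ, -, hξ⟩ := exists_nonpos_of_mul_rpow_le_deriv hk hσ
    (fun ξ hξ => (hu.hasDerivAt (Ioo_subset_Ioo_left hr.1 (hJ hξ))).const_sub 1) hbound
  linarith [hlt ξ]

theorem lt_one (hu : IsTWSol p c D h g u) {r : ℝ} (hr : r ∈ Ico (0 : ℝ) 1) (hσ : 1 ≤ σ)
    (hrate : ∀ a b, u a = 1 → a < b → MapsTo u (Ioo a b) (Ioo r 1) →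
      ∃ k > 0, ∀ ξ ∈ Ioo a b, -deriv u ξ ≤ k * (1 - u ξ) ^ σ) (ξ : ℝ) : u ξ < 1 := by
  refine (hu.mem ξ).2.lt_of_ne fun hξ => ?_
  obtain ⟨a, ha, hlt⟩ := hu.exists_last_eq_one hξ
  obtain ⟨b, hab, hb⟩ := mem_nhdsGT_iff_exists_Ioo_subset.1
    (mem_nhdsWithin_of_mem_nhds (hu.cont.continuousAt (lt_mem_nhds (ha.symm ▸ hr.2))))
  have hJ : MapsTo u (Ioo a b) (Ioo r 1) := fun ξ hξ => ⟨hb hξ, hlt ξ hξ.1⟩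
  obtain ⟨k, hk, hbound⟩ := hrate a b ha hab hJ
  have hlinear (ξ) (hξ : ξ ∈ Ioo a b) : -deriv u ξ ≤ k * (1 - u ξ) := by
    refine (hbound ξ hξ).trans (mul_le_mul_of_nonneg_left ?_ hk.le)
    exact Real.rpow_le_self_of_le_one (sub_nonneg.2 (hu.mem ξ).2)
      (sub_le_self 1 (hu.mem ξ).1) hσ
  obtain ⟨ξ, hξ⟩ := nonempty_Ioo.2 (mem_Ioi.1 hab)
  have hone : 1 - u ξ ≤ 0 := nonpos_of_deriv_le_mul (s := fun ξ => 1 - u ξ)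
    (continuous_const.sub hu.cont).continuousOn (by simp [ha])
    (fun ξ hξ => (hu.hasDerivAt (Ioo_subset_Ioo_left hr.1 (hJ hξ))).const_sub 1)
    hlinear ξ (Ioo_subset_Icc_self hξ)
  linarith [hlt ξ hξ.1]

end IsTWSol

theorem stmt17_general {p c β γ : ℝ} {D h g u : ℝ → ℝ} (hp : 1 < p)
    (hh : h =O[𝓝[<] 1] fun _ => (1 : ℝ)) (hu : IsTWSol p c D h g u)
    (hDlim : ∃ L > 0, Tendsto (fun v => D v / (1 - v) ^ β) (𝓝[<] 1) (𝓝 L))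
    (hglim : ∃ M > 0, Tendsto (fun v => g v / (1 - v) ^ γ) (𝓝[<] 1) (𝓝 M))
    (h1 : -1 < γ + β / (p - 1)) (h2 : γ + β / (p - 1) ≤ 1 / (p - 1)) :
    ((γ - β + 1) / p < 1 → ∃ ξ, u ξ = 1) ∧ (1 ≤ (γ - β + 1) / p → ∀ ξ, u ξ < 1) := by
  have hp0 : 0 < p := by linarith
  have hp1 : 0 < p - 1 := sub_pos.2 hp
  set σ := (γ - β + 1) / p with hσdef
  have hσ : β + p * σ = γ + 1 := by rw [hσdef]; field_simp; ring
  have hβ : β = β / (p - 1) * (p - 1) := (div_mul_cancel₀ _ hp1.ne').symm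
  have hσγ : σ < γ + 1 := by
    rw [hσdef, div_lt_iff₀ hp0]
    linear_combination (p - 1) * h1 - hβ
  have hγσ : γ ≤ σ := by
    rw [hσdef, le_div_iff₀ hp0]
    linear_combination (p - 1) * h2 + hβ + div_mul_cancel₀ (1 : ℝ) hp1.ne'
  obtain ⟨r, hr, hrate⟩ := hu.exists_neg_deriv_bounds hp hh hDlim hglim hσ hσγ hγσ
  refine ⟨fun hσ1 => hu.exists_eq_one hr hσ1 fun b hJ => ?_,
    fun hσ1 => hu.lt_one hr hσ1 fun a b ha hab hJ => ?_⟩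
  · exact (hrate (Iio b) ordConnected_Iio isOpen_Iio hJ
      (tendsto_comp_val_Iio_atBot.2 hu.lim_bot)).1
  · exact (hrate (Ioo a b) ordConnected_Ioo isOpen_Ioo hJ ((tendsto_comp_coe_Ioo_atBot hab).2
      ((ha ▸ hu.cont.tendsto a).mono_left nhdsWithin_le_nhds))).2

/-- Asymptotics near 1, first regime. -/
theorem stmt17 (p θ c β γ : ℝ) (D H h g u : ℝ → ℝ) (S : CombSetup p θ D H h g)
    (hh0 : ∀ v ∈ Icc (0 : ℝ) 1, 0 ≤ h v)
    (hHpos : ∀ v ∈ Ioc (0 : ℝ) 1, 0 < H v)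
    (hc : 0 < c) (hu : IsTWSol p c D h g u)
    (hγ : 0 < γ)
    (hDlim : ∃ L > (0 : ℝ),
      Tendsto (fun v => D v / (1 - v) ^ β) (nhdsWithin 1 (Iio (1 : ℝ))) (nhds L))
    (hglim : ∃ M > (0 : ℝ),
      Tendsto (fun v => g v / (1 - v) ^ γ) (nhdsWithin 1 (Iio (1 : ℝ))) (nhds M))
    (h1 : -1 < γ + β / (p - 1)) (h2 : γ + β / (p - 1) ≤ 1 / (p - 1)) :
    ((γ - β + 1) / p < 1 → ∃ ξ : ℝ, u ξ = 1) ∧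
    (1 ≤ (γ - β + 1) / p → ∀ ξ : ℝ, u ξ < 1) := by
  have hh : ContinuousWithinAt h (Iio 1) 1 := (S.hh 1
    (right_mem_Icc.2 zero_le_one)).mono_of_mem_nhdsWithin (Icc_mem_nhdsLT zero_lt_one)
  exact stmt17_general S.hp (hh.isBigO_one ℝ) hu hDlim hglim h1 h2
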